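/- Let X_1, X_2, … be identically distributed and extended negatively dependent random variables in a sub-linear expectation space with lim_{c→∞} 𝔼[(|X_1| − c)⁺] = 0 and C_𝕍(|X_1|) < ∞, and set S_n = Σ_{k=1}^n X_k. Then 𝕍*( { liminf_{n→∞} S_n/n < ℰ[X_1] } ∪ { limsup_{n→∞} S_n/n > 𝔼[X_1] } ) = 0. -/

import Mathlib

open Filter MeasureTheory
open scoped ENNReal NNReal

noncomputable section

/-- A sub-linear expectation on `Ω`: a monotone, constant-preserving, sub-additive,
positively homogeneous functional on real random variables (with values in the
extended reals, so that random variables without a finite expectation are allowed). -/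
structure SublinearExp (Ω : Type) where
  E : (Ω → ℝ) → EReal
  mono : ∀ X Y : Ω → ℝ, (∀ ω, X ω ≤ Y ω) → E X ≤ E Y
  const_eq : ∀ c : ℝ, E (fun _ => c) = (c : EReal)
  subadd : ∀ X Y : Ω → ℝ, E (fun ω => X ω + Y ω) ≤ E X + E Y
  pos_homog : ∀ lam : ℝ, 0 ≤ lam → ∀ X : Ω → ℝ,
    E (fun ω => lam * X ω) = (lam : EReal) * E X

namespace SublinearExp

variable {Ω : Type}

/-- The conjugate expectation `ℰ[X] := −𝔼[−X]`. -/
def cE (SL : SublinearExp Ω) (X : Ω → ℝ) : EReal := - SL.E fun ω => - X ω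

/-- The upper capacity `𝕍(A) := inf{𝔼[ξ] : 1_A ≤ ξ}`. -/
def V (SL : SublinearExp Ω) (A : Set Ω) : ℝ :=
  sInf {x : ℝ | ∃ ξ : Ω → ℝ,
    (∀ ω, A.indicator (fun _ => (1 : ℝ)) ω ≤ ξ ω) ∧ SL.E ξ = (x : EReal)}

/-- The lower capacity `𝓋(A) := 1 − 𝕍(Aᶜ)`. -/
def vLow (SL : SublinearExp Ω) (A : Set Ω) : ℝ := 1 - SL.V Aᶜ

/-- The Choquet integral `C_𝕍(X) := ∫₀^∞ 𝕍(X ≥ t) dt` (of a non-negative r.v.). -/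
def Choquet (SL : SublinearExp Ω) (X : Ω → ℝ) : ℝ≥0∞ :=
  ∫⁻ t in Set.Ioi (0 : ℝ), ENNReal.ofReal (SL.V {ω | t ≤ X ω})

/-- The outer capacity `𝕍*(A) := inf{Σ_n 𝕍(A_n) : A ⊆ ∪_n A_n}`. -/
def Vout (SL : SublinearExp Ω) (A : Set Ω) : ℝ≥0∞ :=
  ⨅ (B : ℕ → Set Ω) (_ : A ⊆ ⋃ n, B n), ∑' n, ENNReal.ofReal (SL.V (B n))

/-- The upper capacity is continuous: continuous from below and from above. -/
def ContinuousCapacity (SL : SublinearExp Ω) : Prop :=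
  (∀ A : ℕ → Set Ω, Monotone A →
    Tendsto (fun n => SL.V (A n)) atTop (nhds (SL.V (⋃ n, A n)))) ∧
  (∀ A : ℕ → Set Ω, Antitone A →
    Tendsto (fun n => SL.V (A n)) atTop (nhds (SL.V (⋂ n, A n))))

/-- Bounded Lipschitz function on ℝ. -/
def IsBLip (g : ℝ → ℝ) : Prop :=
  (∃ L : NNReal, LipschitzWith L g) ∧ ∃ M : ℝ, ∀ x, |g x| ≤ M

/-- Local Lipschitz function on ℝ: `|φ(x) − φ(y)| ≤ C(1+|x|^m+|y|^m)|x−y|`. -/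
def IsLocLip (φ : ℝ → ℝ) : Prop :=
  ∃ (C : ℝ) (m : ℕ), ∀ x y : ℝ, |φ x - φ y| ≤ C * (1 + |x| ^ m + |y| ^ m) * |x - y|

/-- Upper extended negative dependence (finite family) with dominating constant `K`:
`𝔼[∏ g_i(X_i)] ≤ K ∏ 𝔼[g_i(X_i)]` for all non-negative bounded Lipschitz
non-decreasing `g_i`.  (Expectations of bounded functions are finite, whence
the `toReal`.) -/
def UENDFin (SL : SublinearExp Ω) (K : ℝ) {n : ℕ} (X : Fin n → Ω → ℝ) : Prop :=
  ∀ g : Fin n → ℝ → ℝ, (∀ i, IsBLip (g i)) → (∀ i, Monotone (g i)) →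
    (∀ i x, 0 ≤ g i x) →
    SL.E (fun ω => ∏ i, g i (X i ω)) ≤
      ((K * ∏ i, (SL.E fun ω => g i (X i ω)).toReal : ℝ) : EReal)

/-- Upper extended negative dependence for a sequence. -/
def UEND (SL : SublinearExp Ω) (K : ℝ) (X : ℕ → Ω → ℝ) : Prop :=
  ∀ n : ℕ, ∀ g : ℕ → ℝ → ℝ, (∀ i, IsBLip (g i)) → (∀ i, Monotone (g i)) →
    (∀ i x, 0 ≤ g i x) →
    SL.E (fun ω => ∏ i ∈ Finset.range n, g i (X i ω)) ≤
      ((K * ∏ i ∈ Finset.range n, (SL.E fun ω => g i (X i ω)).toReal : ℝ) : EReal)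

/-- Lower extended negative dependence for a sequence. -/
def LEND (SL : SublinearExp Ω) (K : ℝ) (X : ℕ → Ω → ℝ) : Prop :=
  ∀ n : ℕ, ∀ g : ℕ → ℝ → ℝ, (∀ i, IsBLip (g i)) → (∀ i, Antitone (g i)) →
    (∀ i x, 0 ≤ g i x) →
    SL.E (fun ω => ∏ i ∈ Finset.range n, g i (X i ω)) ≤
      ((K * ∏ i ∈ Finset.range n, (SL.E fun ω => g i (X i ω)).toReal : ℝ) : EReal)

/-- Extended negative dependence = upper and lower END. -/
def END (SL : SublinearExp Ω) (K : ℝ) (X : ℕ → Ω → ℝ) : Prop :=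
  UEND SL K X ∧ LEND SL K X

/-- Upper extended negative dependence under the conjugate expectation `ℰ`
(finite family). -/
def UENDFinConj (SL : SublinearExp Ω) (K : ℝ) {n : ℕ} (X : Fin n → Ω → ℝ) : Prop :=
  ∀ g : Fin n → ℝ → ℝ, (∀ i, IsBLip (g i)) → (∀ i, Monotone (g i)) →
    (∀ i x, 0 ≤ g i x) →
    SL.cE (fun ω => ∏ i, g i (X i ω)) ≤
      ((K * ∏ i, (SL.cE fun ω => g i (X i ω)).toReal : ℝ) : EReal)

/-- Upper extended negative dependence under the conjugate expectation (sequence). -/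
def UENDconj (SL : SublinearExp Ω) (K : ℝ) (X : ℕ → Ω → ℝ) : Prop :=
  ∀ n : ℕ, ∀ g : ℕ → ℝ → ℝ, (∀ i, IsBLip (g i)) → (∀ i, Monotone (g i)) →
    (∀ i x, 0 ≤ g i x) →
    SL.cE (fun ω => ∏ i ∈ Finset.range n, g i (X i ω)) ≤
      ((K * ∏ i ∈ Finset.range n, (SL.cE fun ω => g i (X i ω)).toReal : ℝ) : EReal)

/-- Lower extended negative dependence under the conjugate expectation (sequence). -/
def LENDconj (SL : SublinearExp Ω) (K : ℝ) (X : ℕ → Ω → ℝ) : Prop :=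
  ∀ n : ℕ, ∀ g : ℕ → ℝ → ℝ, (∀ i, IsBLip (g i)) → (∀ i, Antitone (g i)) →
    (∀ i x, 0 ≤ g i x) →
    SL.cE (fun ω => ∏ i ∈ Finset.range n, g i (X i ω)) ≤
      ((K * ∏ i ∈ Finset.range n, (SL.cE fun ω => g i (X i ω)).toReal : ℝ) : EReal)

/-- Extended negative dependence under the conjugate expectation. -/
def ENDconj (SL : SublinearExp Ω) (K : ℝ) (X : ℕ → Ω → ℝ) : Prop :=
  UENDconj SL K X ∧ LENDconj SL K X

/-- Extended independence of a sequence: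
`𝔼[∏ ψ_i(X_i)] = ∏ 𝔼[ψ_i(X_i)]` for non-negative local Lipschitz `ψ_i`,
whenever the expectations involved are finite. -/
def ExtIndep (SL : SublinearExp Ω) (X : ℕ → Ω → ℝ) : Prop :=
  ∀ n : ℕ, ∀ ψ : ℕ → ℝ → ℝ, (∀ i, IsLocLip (ψ i)) → (∀ i x, 0 ≤ ψ i x) →
    (∀ i ∈ Finset.range n, SL.E (fun ω => ψ i (X i ω)) ≠ ⊤) →
    SL.E (fun ω => ∏ i ∈ Finset.range n, ψ i (X i ω)) =
      ((∏ i ∈ Finset.range n, (SL.E fun ω => ψ i (X i ω)).toReal : ℝ) : EReal)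

/-- Extended independence of two random variables. -/
def ExtIndepPair (SL : SublinearExp Ω) (Y Z : Ω → ℝ) : Prop :=
  ∀ ψ₁ ψ₂ : ℝ → ℝ, IsLocLip ψ₁ → IsLocLip ψ₂ →
    (∀ x, 0 ≤ ψ₁ x) → (∀ x, 0 ≤ ψ₂ x) →
    SL.E (fun ω => ψ₁ (Y ω)) ≠ ⊤ → SL.E (fun ω => ψ₂ (Z ω)) ≠ ⊤ →
    SL.E (fun ω => ψ₁ (Y ω) * ψ₂ (Z ω)) =
      (((SL.E fun ω => ψ₁ (Y ω)).toReal * (SL.E fun ω => ψ₂ (Z ω)).toReal : ℝ) : EReal)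

/-- Identically distributed: `𝔼[φ(X_i)] = 𝔼[φ(X_1)]` for all local Lipschitz `φ`. -/
def IdentDist (SL : SublinearExp Ω) (X : ℕ → Ω → ℝ) : Prop :=
  ∀ (i : ℕ) (φ : ℝ → ℝ), IsLocLip φ →
    SL.E (fun ω => φ (X i ω)) = SL.E fun ω => φ (X 0 ω)

end SublinearExp

/-- `log x = ln(x ∨ e)`. -/
def paperLog (x : ℝ) : ℝ := Real.log (max x (Real.exp 1))

/-- `a_n = √(2 n log log n)` with the above convention for `log`. -/
def lilA (n : ℕ) : ℝ := Real.sqrt (2 * n * paperLog (paperLog n))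

/-!
Both halves are the same one-sided bound, applied to `X` and to `-X`. Fix `δ > 0` and a level `c`
with `𝔼[(|Z| - c)⁺] ≤ δ`, and split `X k ≤ max (min (X k) c) (-c) + (X k - c)⁺`. Chernoff's method
gives an exponentially small capacity for large deviations of the sums of the bounded part. The sums
of the nonnegative part increase with `n`, so it suffices to control them for `n = M * 2 ^ j`. There
the summands are truncated at `2 ^ (j + 1)`, and with `Y = (Z - c)⁺` optimizing Chernoff's bound
gives a capacity of order `n * 𝔼[min Y (2 ^ (j + 1)) ^ 2] / 4 ^ j`; these bounds, and the capacities
that some summand exceeds its truncation level, are summable in `j` because the Choquet integral is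
finite. Borel–Cantelli for the outer measure `𝕍*` concludes.
-/

namespace SublinearExp

/-! ### Real inequalities -/

lemma exp_le_one_add_add_sq_mul_exp {u l : ℝ} (hl : 0 ≤ l) (hu : u ≤ l) :
    Real.exp u ≤ 1 + u + u ^ 2 * Real.exp l := by
  have h_sub : Real.exp u - 1 ≤ u * Real.exp u := by
    have h_neg := mul_le_mul_of_nonneg_right (Real.one_sub_le_exp_neg u) (Real.exp_pos u).le
    rw [← Real.exp_add, neg_add_cancel, Real.exp_zero] at h_neg
    linarith
  suffices h : u * (Real.exp u - 1) ≤ u ^ 2 * Real.exp l by linarith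
  rcases le_total 0 u with h0 | h0
  · calc u * (Real.exp u - 1) ≤ u * (u * Real.exp u) := mul_le_mul_of_nonneg_left h_sub h0
      _ = u ^ 2 * Real.exp u := by ring
      _ ≤ u ^ 2 * Real.exp l := by gcongr
  · calc u * (Real.exp u - 1) ≤ u * u :=
          mul_le_mul_of_nonpos_left (by linarith [Real.add_one_le_exp u]) h0
      _ = u ^ 2 * 1 := by ring
      _ ≤ u ^ 2 * Real.exp l := by gcongr; exact Real.one_le_exp hl

lemma exists_nonneg_exp_sub_le {q : ℝ} (hq : 0 < q) (hq1 : q ≤ 1) :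
    ∃ s : ℝ, 0 ≤ s ∧ Real.exp (s ^ 2 * q * Real.exp s - 2 * s) ≤ Real.exp 2 * q := by
  have hlog : Real.log q ≤ 0 := Real.log_nonpos hq.le hq1
  obtain ⟨s, hs⟩ : ∃ s, q = Real.exp (-(2 * s)) :=
    ⟨-Real.log q / 2, by rw [show -(2 * (-Real.log q / 2)) = Real.log q by ring, Real.exp_log hq]⟩
  have hs0 : 0 ≤ s := by
    rw [hs, Real.log_exp] at hlog
    linarith
  have h_sq : s ^ 2 * q * Real.exp s ≤ 2 := by
    rw [hs, mul_assoc, ← Real.exp_add, show -(2 * s) + s = -s by ring, Real.exp_neg,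
      ← div_eq_mul_inv, div_le_iff₀ (Real.exp_pos s)]
    linarith [Real.quadratic_le_exp_of_nonneg hs0]
  refine ⟨s, hs0, ?_⟩
  nth_rw 2 [hs]
  rw [← Real.exp_add, Real.exp_le_exp]
  linarith

lemma sq_min_two_pow_le {y : ℝ} (hy : 0 ≤ y) (j : ℕ) :
    min y (2 ^ j) ^ 2 ≤
      1 + ∑ i ∈ Finset.range j, 4 ^ (i + 1) * (Set.Ici ((2 : ℝ) ^ i)).indicator 1 y := by
  have h_sum (n : ℕ) :
      (0 : ℝ) ≤ ∑ i ∈ Finset.range n, 4 ^ (i + 1) * (Set.Ici ((2 : ℝ) ^ i)).indicator 1 y :=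
    Finset.sum_nonneg fun i _ => mul_nonneg (by positivity)
      (Set.indicator_nonneg (fun _ _ => zero_le_one) y)
  induction j with
  | zero => simpa using pow_le_one₀ (n := 2) (le_min hy zero_le_one) (min_le_right y 1)
  | succ j ih =>
    rw [Finset.sum_range_succ]
    rcases lt_or_ge y (2 ^ j) with h | h
    · rw [min_eq_left h.le] at ih
      rw [min_eq_left (h.le.trans (pow_le_pow_right₀ one_le_two j.le_succ)),
        Set.indicator_of_notMem (by simpa using h)]
      linarith
    · rw [Set.indicator_of_mem (Set.mem_Ici.2 h), Pi.one_apply]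
      have h_min : min y (2 ^ (j + 1)) ^ 2 ≤ ((2 : ℝ) ^ (j + 1)) ^ 2 :=
        pow_le_pow_left₀ (le_min hy (by positivity)) (min_le_right _ _) 2
      rw [← pow_mul, mul_comm, pow_mul, show (2 : ℝ) ^ 2 = 4 by norm_num] at h_min
      rw [mul_one, ← add_assoc]
      exact h_min.trans (le_add_of_nonneg_left (add_nonneg zero_le_one (h_sum j)))

lemma exists_dyadic_between {M n J : ℕ} (hM : 0 < M) (hn : M * 2 ^ J ≤ n) :
    ∃ j, J ≤ j ∧ n ≤ M * 2 ^ j ∧ M * 2 ^ j ≤ 2 * n := by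
  have h_div : 2 ^ J ≤ n / M := (Nat.le_div_iff_mul_le hM).2 (by rwa [mul_comm])
  have h_div0 : n / M ≠ 0 := (lt_of_lt_of_le (by positivity) h_div).ne'
  refine ⟨Nat.log 2 (n / M) + 1, (Nat.le_log_of_pow_le one_lt_two h_div).trans (Nat.le_succ _),
    ?_, ?_⟩
  · rw [mul_comm]
    exact ((Nat.div_lt_iff_lt_mul hM).1 (Nat.lt_pow_succ_log_self one_lt_two _)).le
  · calc M * 2 ^ (Nat.log 2 (n / M) + 1) = 2 * (M * 2 ^ Nat.log 2 (n / M)) := by ring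
      _ ≤ 2 * (M * (n / M)) := by gcongr; exact Nat.pow_log_le_self 2 h_div0
      _ ≤ 2 * n := by gcongr; exact Nat.mul_div_le n M

lemma tsum_two_pow_mul_le_two_mul_lintegral {g : ℝ → ℝ≥0∞} (hg : AntitoneOn g (Set.Ioi 0)) :
    ∑' j : ℕ, 2 ^ j * g (2 ^ j) ≤ 2 * ∫⁻ t in Set.Ioi 0, g t := by
  set e : ℕ → ℝ := fun j => 2 ^ j / 2 with he
  have he_succ (j : ℕ) : e (Order.succ j) = 2 ^ j := by
    simp only [he, Nat.succ_eq_succ, Nat.succ_eq_add_one, pow_succ]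
    ring
  have he_mono : Monotone e := fun i j hij =>
    div_le_div_of_nonneg_right (pow_le_pow_right₀ one_le_two hij) zero_le_two
  have he_pos (j : ℕ) : 0 < e j := by positivity
  have h_term (j : ℕ) : 2 ^ j * g (2 ^ j) ≤ 2 * ∫⁻ t in Set.Ioc (e j) (e (Order.succ j)), g t := by
    have h_vol : 2 * volume (Set.Ioc (e j) (e (Order.succ j))) = 2 ^ j := by
      rw [Real.volume_Ioc, he_succ, ← ENNReal.ofReal_ofNat 2, ← ENNReal.ofReal_mul zero_le_two,
        ← ENNReal.ofReal_pow zero_le_two]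
      congr 1
      simp only [he]
      ring
    rw [← h_vol, mul_assoc, mul_comm (volume _), ← setLIntegral_const]
    refine mul_le_mul_right (setLIntegral_mono' measurableSet_Ioc fun t ht => ?_) 2
    exact hg ((he_pos j).trans ht.1) (Set.mem_Ioi.2 (by positivity)) (ht.2.trans_eq (he_succ j))
  calc ∑' j : ℕ, 2 ^ j * g (2 ^ j)
      ≤ ∑' j, 2 * ∫⁻ t in Set.Ioc (e j) (e (Order.succ j)), g t := ENNReal.tsum_le_tsum h_term
    _ = 2 * ∫⁻ t in ⋃ j, Set.Ioc (e j) (e (Order.succ j)), g t := by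
        rw [ENNReal.tsum_mul_left, lintegral_iUnion (fun _ => measurableSet_Ioc)
          he_mono.pairwise_disjoint_on_Ioc_succ]
    _ ≤ 2 * ∫⁻ t in Set.Ioi 0, g t := by
        gcongr
        exact Set.iUnion_subset fun j t ht => (he_pos j).trans ht.1

/-! ### Bounded Lipschitz functions -/

lemma isLocLip_of_lipschitzWith {g : ℝ → ℝ} {L : ℝ≥0} (hg : LipschitzWith L g) : IsLocLip g := by
  refine ⟨L, 0, fun x y => (hg.dist_le_mul x y).trans ?_⟩
  rw [Real.dist_eq]
  refine mul_le_mul_of_nonneg_right ?_ (abs_nonneg _)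
  simp only [pow_zero]
  linarith [L.coe_nonneg]

lemma IsBLip.comp {g f : ℝ → ℝ} {L : ℝ≥0} (hg : IsBLip g) (hf : LipschitzWith L f) :
    IsBLip fun x => g (f x) := by
  obtain ⟨⟨L', hL'⟩, B, hB⟩ := hg
  exact ⟨⟨L' * L, hL'.comp hf⟩, B, fun x => hB (f x)⟩

lemma isBLip_exp_min (b : ℝ) : IsBLip fun x => Real.exp (min x b) := by
  have h_exp : LipschitzOnWith (Real.exp b).toNNReal Real.exp (Set.Iic b) :=
    (convex_Iic b).lipschitzOnWith_of_nnnorm_deriv_le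
      (fun _ _ => Real.differentiableAt_exp) fun x hx => by
        rw [← NNReal.coe_le_coe, Real.deriv_exp, coe_nnnorm,
          Real.norm_of_nonneg (Real.exp_pos x).le, Real.coe_toNNReal _ (Real.exp_pos b).le]
        exact Real.exp_le_exp.2 hx
  refine ⟨⟨_, lipschitzOnWith_univ.1 (h_exp.comp (LipschitzWith.id.min_const b).lipschitzOnWith
    fun x _ => min_le_right x b)⟩, Real.exp b, fun x => ?_⟩
  rw [Real.abs_exp]
  exact Real.exp_le_exp.2 (min_le_right x b)

lemma isBLip_exp_mul_min {t : ℝ} (ht : 0 ≤ t) (T : ℝ) :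
    IsBLip fun x => Real.exp (t * min x T) := by
  simpa only [smul_eq_mul, mul_min_of_nonneg _ _ ht] using
    (isBLip_exp_min (t * T)).comp (lipschitzWith_smul t)

lemma isBLip_min_max_sub (a d : ℝ) : IsBLip fun x => min (max (x - a) 0) d :=
  ⟨⟨_, ((LipschitzWith.id.sub (LipschitzWith.const a)).max_const 0).min_const d⟩, |d|, fun x => by
    change |min (max (x - a) 0) d| ≤ |d|
    rcases min_cases (max (x - a) 0) d with ⟨h, h'⟩ | ⟨h, -⟩ <;> rw [h]
    rw [abs_of_nonneg (le_max_right _ _)]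
    exact h'.trans (le_abs_self d)⟩

variable {Ω : Type}

/-! ### Expectations and capacities -/

section Expectation

variable (SL : SublinearExp Ω)

lemma E_ne_bot (X : Ω → ℝ) : SL.E X ≠ ⊥ := by
  intro h
  have h_add := SL.subadd X fun ω => -X ω
  simp only [add_neg_cancel, h, EReal.bot_add, SL.const_eq 0] at h_add
  simp at h_add

lemma coe_toReal_E {X : Ω → ℝ} {x : ℝ} (hX : SL.E X ≤ x) : ((SL.E X).toReal : EReal) = SL.E X :=
  EReal.coe_toReal (ne_top_of_le_ne_top (EReal.coe_ne_top x) hX) (SL.E_ne_bot X)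

lemma E_nonneg {X : Ω → ℝ} (h : ∀ ω, 0 ≤ X ω) : 0 ≤ SL.E X :=
  (SL.const_eq 0).symm.trans_le (SL.mono (fun _ => 0) X h)

lemma E_add_le {X Y : Ω → ℝ} {x y : ℝ} (hX : SL.E X ≤ x) (hY : SL.E Y ≤ y) :
    SL.E (fun ω => X ω + Y ω) ≤ ((x + y : ℝ) : EReal) := by
  rw [EReal.coe_add]
  exact (SL.subadd X Y).trans (add_le_add hX hY)

lemma E_const_mul_le {X : Ω → ℝ} {x a : ℝ} (ha : 0 ≤ a) (hX : SL.E X ≤ x) :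
    SL.E (fun ω => a * X ω) ≤ ((a * x : ℝ) : EReal) := by
  rw [SL.pos_homog a ha, EReal.coe_mul]
  exact mul_le_mul_of_nonneg_left hX (by exact_mod_cast ha)

lemma E_sum_le {ι : Type*} (s : Finset ι) {X : ι → Ω → ℝ} {x : ι → ℝ}
    (hX : ∀ i ∈ s, SL.E (X i) ≤ x i) :
    SL.E (fun ω => ∑ i ∈ s, X i ω) ≤ ((∑ i ∈ s, x i : ℝ) : EReal) := by
  classical
  induction s using Finset.induction_on with
  | empty => simpa using (SL.const_eq 0).le
  | insert a s ha ih =>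
    simp only [Finset.sum_insert ha]
    exact SL.E_add_le (hX a (Finset.mem_insert_self a s))
      (ih fun i hi => hX i (Finset.mem_insert_of_mem hi))

lemma coe_V (A : Set Ω) : (SL.V A : EReal) = SL.E (A.indicator 1) := by
  have h_le_one : SL.E (A.indicator 1) ≤ (1 : ℝ) :=
    (SL.mono _ _ (Set.indicator_le_self' fun _ _ => zero_le_one)).trans (SL.const_eq 1).le
  have h_least : IsLeast {x : ℝ | ∃ ξ : Ω → ℝ,
      (∀ ω, A.indicator (fun _ => (1 : ℝ)) ω ≤ ξ ω) ∧ SL.E ξ = (x : EReal)}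
      (SL.E (A.indicator 1)).toReal := by
    refine ⟨⟨_, fun _ => le_rfl, (SL.coe_toReal_E h_le_one).symm⟩, ?_⟩
    rintro x ⟨ξ, hξ, hx⟩
    rw [← EReal.coe_le_coe_iff, SL.coe_toReal_E h_le_one, ← hx]
    exact SL.mono _ _ hξ
  rw [V, h_least.csInf_eq, SL.coe_toReal_E h_le_one]

lemma V_le {A : Set Ω} {ξ : Ω → ℝ} {x : ℝ} (h0 : ∀ ω, 0 ≤ ξ ω) (h1 : ∀ ω ∈ A, 1 ≤ ξ ω)
    (hx : SL.E ξ ≤ x) : SL.V A ≤ x := by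
  rw [← EReal.coe_le_coe_iff, SL.coe_V]
  exact (SL.mono _ _ (Set.indicator_le' h1 fun ω _ => h0 ω)).trans hx

lemma V_nonneg (A : Set Ω) : 0 ≤ SL.V A := by
  rw [← EReal.coe_nonneg, SL.coe_V]
  exact SL.E_nonneg (Set.indicator_nonneg fun _ _ => zero_le_one)

lemma V_le_one (A : Set Ω) : SL.V A ≤ 1 :=
  SL.V_le (fun _ => zero_le_one) (fun _ _ => le_rfl) (SL.const_eq 1).le

lemma V_empty : SL.V ∅ = 0 :=
  le_antisymm (SL.V_le (fun _ => le_rfl) (by simp) (SL.const_eq 0).le) (SL.V_nonneg ∅)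

lemma V_mono {A B : Set Ω} (h : A ⊆ B) : SL.V A ≤ SL.V B :=
  SL.V_le (Set.indicator_nonneg fun _ _ => zero_le_one)
    (fun _ hω => (Set.indicator_of_mem (h hω) 1).ge) (SL.coe_V B).ge

lemma V_biUnion_le {ι : Type*} (s : Finset ι) (A : ι → Set Ω) :
    SL.V (⋃ i ∈ s, A i) ≤ ∑ i ∈ s, SL.V (A i) := by
  have h_nonneg (ω : Ω) (i : ι) : 0 ≤ (A i).indicator (1 : Ω → ℝ) ω :=
    Set.indicator_nonneg (fun _ _ => zero_le_one) ω
  refine SL.V_le (fun ω => Finset.sum_nonneg fun i _ => h_nonneg ω i) (fun ω hω => ?_)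
    (SL.E_sum_le s fun i _ => (SL.coe_V (A i)).ge)
  obtain ⟨i, hi, hωi⟩ := Set.mem_iUnion₂.1 hω
  calc (1 : ℝ) = (A i).indicator 1 ω := (Set.indicator_of_mem hωi 1).symm
    _ ≤ ∑ i ∈ s, (A i).indicator 1 ω := Finset.single_le_sum (fun i _ => h_nonneg ω i) hi

lemma Choquet_mono {Y Z : Ω → ℝ} (h : ∀ ω, Y ω ≤ Z ω) : SL.Choquet Y ≤ SL.Choquet Z :=
  lintegral_mono fun _ => ENNReal.ofReal_le_ofReal (SL.V_mono fun ω hω => le_trans hω (h ω))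

lemma summable_two_pow_mul_V {Y : Ω → ℝ} (hCh : SL.Choquet Y ≠ ⊤) :
    Summable fun j : ℕ => (2 : ℝ) ^ j * SL.V {ω | (2 : ℝ) ^ j ≤ Y ω} := by
  have h_anti : Antitone fun t => ENNReal.ofReal (SL.V {ω | t ≤ Y ω}) := fun _ _ hst =>
    ENNReal.ofReal_le_ofReal (SL.V_mono fun _ hω => le_trans hst hω)
  have h_tsum := ne_top_of_le_ne_top (ENNReal.mul_ne_top ENNReal.ofNat_ne_top hCh)
    (tsum_two_pow_mul_le_two_mul_lintegral (h_anti.antitoneOn _))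
  refine (ENNReal.summable_toReal h_tsum).congr fun j => ?_
  rw [ENNReal.toReal_mul, ENNReal.toReal_ofReal (SL.V_nonneg _)]
  simp

/-- A dyadic majorant of `2 ^ (-j) 𝔼[min Y (2 ^ (j + 1)) ^ 2] / 4` for `0 ≤ Y`, written as a Cauchy
product with a geometric series so that it is visibly summable when `C_𝕍(Y) < ∞`. -/
def dyadicSecondMoment (Y : Ω → ℝ) (j : ℕ) : ℝ :=
  (1 / 2) ^ j + ∑ i ∈ Finset.range (j + 1),
    2 ^ i * SL.V {ω | (2 : ℝ) ^ i ≤ Y ω} * (1 / 2) ^ (j - i)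

lemma dyadicSecondMoment_pos (Y : Ω → ℝ) (j : ℕ) : 0 < SL.dyadicSecondMoment Y j :=
  add_pos_of_pos_of_nonneg (by positivity) (Finset.sum_nonneg fun _ _ =>
    mul_nonneg (mul_nonneg (by positivity) (SL.V_nonneg _)) (by positivity))

lemma summable_dyadicSecondMoment {Y : Ω → ℝ} (hCh : SL.Choquet Y ≠ ⊤) :
    Summable (SL.dyadicSecondMoment Y) :=
  summable_geometric_two.add (summable_norm_sum_mul_range_of_summable_norm
    (SL.summable_two_pow_mul_V hCh).norm summable_geometric_two.norm).of_norm

lemma E_sq_min_two_pow_le {Y : Ω → ℝ} (hY : ∀ ω, 0 ≤ Y ω) (j : ℕ) :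
    SL.E (fun ω => min (Y ω) (2 ^ (j + 1)) ^ 2) ≤
      ((4 * 2 ^ j * SL.dyadicSecondMoment Y j : ℝ) : EReal) := by
  have h_sum : SL.E (fun ω => 1 + ∑ i ∈ Finset.range (j + 1),
      4 ^ (i + 1) * {ω | (2 : ℝ) ^ i ≤ Y ω}.indicator 1 ω) ≤
      ((1 + ∑ i ∈ Finset.range (j + 1), 4 ^ (i + 1) * SL.V {ω | (2 : ℝ) ^ i ≤ Y ω} : ℝ) : EReal) :=
    SL.E_add_le (SL.const_eq 1).le
      (SL.E_sum_le _ fun i _ => SL.E_const_mul_le (by positivity) (SL.coe_V _).ge)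
  refine (SL.mono _ _ fun ω => sq_min_two_pow_le (hY ω) (j + 1)).trans (h_sum.trans ?_)
  have h_term : ∀ i ∈ Finset.range (j + 1), 4 ^ (i + 1) * SL.V {ω | (2 : ℝ) ^ i ≤ Y ω} =
      4 * 2 ^ j * (2 ^ i * SL.V {ω | (2 : ℝ) ^ i ≤ Y ω} * (1 / 2) ^ (j - i)) := by
    intro i hi
    have h_pow : (2 : ℝ) ^ j * (1 / 2) ^ (j - i) = 2 ^ i := by
      rw [← Nat.add_sub_of_le (Finset.mem_range_succ_iff.1 hi), pow_add, Nat.add_sub_cancel_left,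
        mul_assoc, ← mul_pow]
      norm_num
    rw [pow_succ, show (4 : ℝ) = 2 * 2 by norm_num, mul_pow]
    linear_combination (-4 * 2 ^ i * SL.V {ω | (2 : ℝ) ^ i ≤ Y ω}) * h_pow
  rw [EReal.coe_le_coe_iff, dyadicSecondMoment, mul_add, Finset.mul_sum,
    Finset.sum_congr rfl h_term, mul_assoc, ← mul_pow]
  norm_num

/-- The outer capacity `𝕍*`, bundled as an outer measure. -/
def outerV : OuterMeasure Ω :=
  OuterMeasure.ofFunction (fun A => ENNReal.ofReal (SL.V A)) (by simp [SL.V_empty])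

lemma Vout_eq_outerV (A : Set Ω) : SL.Vout A = SL.outerV A := rfl

lemma outerV_frequently_eq_zero {A : ℕ → Set Ω} {a : ℕ → ℝ} (ha : Summable a)
    (h : ∀ n, SL.V (A n) ≤ a n) : SL.outerV {ω | ∃ᶠ n in atTop, ω ∈ A n} = 0 := by
  refine measure_setOfPred_frequently_eq_zero (p := fun n ω => ω ∈ A n) ?_
  refine ne_top_of_le_ne_top ha.tsum_ofReal_ne_top (ENNReal.tsum_le_tsum fun n => ?_)
  exact (OuterMeasure.ofFunction_le _).trans (ENNReal.ofReal_le_ofReal (h n))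

lemma exists_E_max_sub_le {Z : Ω → ℝ}
    (hunif : Tendsto (fun c : ℝ => SL.E fun ω => max (|Z ω| - c) 0) atTop (nhds 0))
    {δ : ℝ} (hδ : 0 < δ) : ∃ c : ℝ, 0 ≤ c ∧ SL.E (fun ω => max (|Z ω| - c) 0) ≤ δ :=
  ((eventually_ge_atTop 0).and
    (hunif.eventually_le_const (show (0 : EReal) < δ by exact_mod_cast hδ))).exists

lemma exists_E_eq_coe {Z : Ω → ℝ}
    (hunif : Tendsto (fun c : ℝ => SL.E fun ω => max (|Z ω| - c) 0) atTop (nhds 0)) :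
    ∃ μ : ℝ, SL.E Z = μ := by
  obtain ⟨c, -, hc⟩ := SL.exists_E_max_sub_le hunif one_pos
  refine ⟨_, (SL.coe_toReal_E (le_trans (SL.mono _ _ fun ω => ?_)
    (SL.E_add_le hc (SL.const_eq c).le))).symm⟩
  linarith [le_abs_self (Z ω), le_max_left (|Z ω| - c) 0]

end Expectation

/-! ### Upper extended negative dependence and domination -/

/-- The sequence `X` is stochastically dominated by `Z`: the increasing stochastic order, tested on
bounded Lipschitz functions. The domination of `X` by `Z` together with that of `-X` by `-Z` weakens
identical distribution. -/
def StochDom (SL : SublinearExp Ω) (X : ℕ → Ω → ℝ) (Z : Ω → ℝ) : Prop :=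
  ∀ (k : ℕ) (φ : ℝ → ℝ), IsBLip φ → Monotone φ →
    SL.E (fun ω => φ (X k ω)) ≤ SL.E fun ω => φ (Z ω)

variable {SL : SublinearExp Ω} {K : ℝ} {X : ℕ → Ω → ℝ} {Z : Ω → ℝ}

lemma IdentDist.stochDom_comp (hX : IdentDist SL X) {f : ℝ → ℝ} {L : ℝ≥0}
    (hf : LipschitzWith L f) : StochDom SL (fun k ω => f (X k ω)) fun ω => f (X 0 ω) :=
  fun k _ ⟨⟨_, hφ⟩, _⟩ _ => (hX k _ (isLocLip_of_lipschitzWith (hφ.comp hf))).le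

lemma StochDom.comp (h : StochDom SL X Z) {f : ℝ → ℝ} {L : ℝ≥0} (hf : LipschitzWith L f)
    (hf_mono : Monotone f) : StochDom SL (fun k ω => f (X k ω)) fun ω => f (Z ω) :=
  fun k _ hφ hφ_mono => h k _ (hφ.comp hf) (hφ_mono.comp hf_mono)

lemma UEND.comp (h : UEND SL K X) {f : ℝ → ℝ} {L : ℝ≥0} (hf : LipschitzWith L f)
    (hf_mono : Monotone f) : UEND SL K fun k ω => f (X k ω) :=
  fun n _ hg hg_mono hg_nonneg => h n _ (fun i => (hg i).comp hf)
    (fun i => (hg_mono i).comp hf_mono) fun i x => hg_nonneg i (f x)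

lemma LEND.neg (h : LEND SL K X) : UEND SL K fun k ω => -X k ω :=
  fun n _ hg hg_mono hg_nonneg => h n _ (fun i => (hg i).comp LipschitzWith.id.neg)
    (fun i _ _ hxy => hg_mono i (neg_le_neg hxy)) fun i x => hg_nonneg i (-x)

lemma UEND.one_le (h : UEND SL K X) : 1 ≤ K := by
  have h_zero := h 0 (fun _ _ => 0) (fun _ => ⟨⟨0, LipschitzWith.const 0⟩, 0, by simp⟩)
    (fun _ => monotone_const) fun _ _ => le_rfl
  simp only [Finset.range_zero, Finset.prod_empty, mul_one, SL.const_eq] at h_zero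
  exact_mod_cast h_zero

lemma StochDom.V_le (h : StochDom SL X Z) {a b : ℝ} (hab : a < b) (k : ℕ) :
    SL.V {ω | b ≤ X k ω} ≤ SL.V {ω | a ≤ Z ω} := by
  set φ : ℝ → ℝ := fun x => min (max (x - a) 0) (b - a) with hφ
  have hd : 0 < b - a := sub_pos.2 hab
  have hφ_mono : Monotone φ := fun x y hxy =>
    min_le_min_right _ (max_le_max_right _ (sub_le_sub_right hxy a))
  have hE : SL.E (fun ω => φ (Z ω)) ≤ (((b - a) * SL.V {ω | a ≤ Z ω} : ℝ) : EReal) := by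
    refine (SL.mono _ _ fun ω => ?_).trans (SL.E_const_mul_le hd.le (SL.coe_V _).ge)
    by_cases hω : a ≤ Z ω
    · simp [hφ, hω]
    · simp [hφ, hω, hd.le, le_of_not_ge hω]
  have hE_X := SL.E_const_mul_le (inv_nonneg.2 hd.le)
    ((h k φ (isBLip_min_max_sub a (b - a)) hφ_mono).trans hE)
  rw [inv_mul_cancel_left₀ hd.ne'] at hE_X
  refine SL.V_le (fun ω => ?_) (fun ω hω => ?_) hE_X
  · exact mul_nonneg (inv_nonneg.2 hd.le) (le_min (le_max_right _ _) hd.le)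
  · have h_top : φ (X k ω) = b - a :=
      min_eq_right (le_max_of_le_left (sub_le_sub_right (show b ≤ X k ω from hω) a))
    rw [h_top, inv_mul_cancel₀ hd.ne']

lemma StochDom.V_exists_le (h : StochDom SL X Z) {a b : ℝ} (hab : a < b) (n : ℕ) :
    SL.V {ω | ∃ k < n, b ≤ X k ω} ≤ n * SL.V {ω | a ≤ Z ω} := by
  calc SL.V {ω | ∃ k < n, b ≤ X k ω}
      ≤ SL.V (⋃ k ∈ Finset.range n, {ω | b ≤ X k ω}) :=
        SL.V_mono fun ω ⟨k, hk, hω⟩ => Set.mem_iUnion₂.2 ⟨k, Finset.mem_range.2 hk, hω⟩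
    _ ≤ ∑ k ∈ Finset.range n, SL.V {ω | b ≤ X k ω} := SL.V_biUnion_le _ _
    _ ≤ ∑ _k ∈ Finset.range n, SL.V {ω | a ≤ Z ω} := Finset.sum_le_sum fun k _ => h.V_le hab k
    _ = n * SL.V {ω | a ≤ Z ω} := by rw [Finset.sum_const, Finset.card_range, nsmul_eq_mul]

/-! ### Exponential inequalities -/

lemma UEND.V_le_sum_le_exp (hX : UEND SL K X) {T t r : ℝ} (hT : ∀ k ω, X k ω ≤ T) (ht : 0 ≤ t)
    (hr : ∀ k, SL.E (fun ω => Real.exp (t * X k ω)) ≤ (Real.exp r : ℝ)) (n : ℕ) (a : ℝ) :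
    SL.V {ω | a ≤ ∑ k ∈ Finset.range n, X k ω} ≤ K * Real.exp (n * r - t * a) := by
  have h_prod := hX n (fun _ x => Real.exp (t * min x T)) (fun _ => isBLip_exp_mul_min ht T)
    (fun _ _ _ hxy => Real.exp_le_exp.2 (mul_le_mul_of_nonneg_left (min_le_min_right T hxy) ht))
    fun _ _ => (Real.exp_pos _).le
  simp only [min_eq_left (hT _ _), ← Real.exp_sum, ← Finset.mul_sum] at h_prod
  have h_toReal : ∏ k ∈ Finset.range n, (SL.E fun ω => Real.exp (t * X k ω)).toReal ≤
      Real.exp (n * r) := by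
    rw [Real.exp_nat_mul, ← Finset.card_range n, ← Finset.prod_const, Finset.card_range]
    refine Finset.prod_le_prod (fun k _ => ?_) fun k _ => ?_
    · exact EReal.toReal_nonneg (SL.E_nonneg fun ω => (Real.exp_pos _).le)
    · rw [← EReal.coe_le_coe_iff, SL.coe_toReal_E (hr k)]
      exact hr k
  have h_mgf : SL.E (fun ω => Real.exp (t * ∑ k ∈ Finset.range n, X k ω)) ≤
      ((K * Real.exp (n * r) : ℝ) : EReal) :=
    h_prod.trans (EReal.coe_le_coe_iff.2
      (mul_le_mul_of_nonneg_left h_toReal (zero_le_one.trans hX.one_le)))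
  refine SL.V_le (fun ω => by positivity) (fun ω hω => ?_)
    ((SL.E_const_mul_le (Real.exp_pos (-(t * a))).le h_mgf).trans_eq ?_)
  · rw [← Real.exp_add]
    have h_mul : t * a ≤ t * ∑ k ∈ Finset.range n, X k ω := mul_le_mul_of_nonneg_left hω ht
    exact Real.one_le_exp (by linarith)
  · rw [mul_left_comm, ← Real.exp_add, neg_add_eq_sub]

lemma UEND.V_le_sum_le_exp_sq (hX : UEND SL K X) (hdom : StochDom SL X Z) {T m B t : ℝ}
    (hT0 : 0 ≤ T) (hT : ∀ k ω, X k ω ≤ T) (hm : SL.E Z ≤ m)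
    (hB : SL.E (fun ω => Z ω ^ 2) ≤ B) (ht : 0 ≤ t) (n : ℕ) (a : ℝ) :
    SL.V {ω | a ≤ ∑ k ∈ Finset.range n, X k ω} ≤
      K * Real.exp (n * (t * m + t ^ 2 * Real.exp (t * T) * B) - t * a) := by
  refine hX.V_le_sum_le_exp hT ht (fun k => ?_) n a
  have h_mono : Monotone fun x => Real.exp (t * min x T) := fun _ _ hxy =>
    Real.exp_le_exp.2 (mul_le_mul_of_nonneg_left (min_le_min_right T hxy) ht)
  have h_pointwise (z : ℝ) : Real.exp (t * min z T) ≤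
      1 + (t * z + t ^ 2 * Real.exp (t * T) * z ^ 2) := by
    have h_sq : min z T ^ 2 ≤ z ^ 2 := by
      rcases le_total z T with h | h
      · rw [min_eq_left h]
      · rw [min_eq_right h]
        exact pow_le_pow_left₀ hT0 h 2
    calc Real.exp (t * min z T)
        ≤ 1 + t * min z T + (t * min z T) ^ 2 * Real.exp (t * T) :=
          exp_le_one_add_add_sq_mul_exp (mul_nonneg ht hT0)
            (mul_le_mul_of_nonneg_left (min_le_right _ _) ht)
      _ = 1 + (t * min z T + t ^ 2 * Real.exp (t * T) * min z T ^ 2) := by ring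
      _ ≤ 1 + (t * z + t ^ 2 * Real.exp (t * T) * z ^ 2) := by
          gcongr
          exact min_le_left _ _
  calc SL.E (fun ω => Real.exp (t * X k ω))
      = SL.E (fun ω => Real.exp (t * min (X k ω) T)) := by simp only [min_eq_left (hT k _)]
    _ ≤ SL.E (fun ω => Real.exp (t * min (Z ω) T)) := hdom k _ (isBLip_exp_mul_min ht T) h_mono
    _ ≤ ((1 + (t * m + t ^ 2 * Real.exp (t * T) * B) : ℝ) : EReal) :=
        (SL.mono _ _ fun ω => h_pointwise (Z ω)).trans (SL.E_add_le (SL.const_eq 1).le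
          (SL.E_add_le (SL.E_const_mul_le ht hm) (SL.E_const_mul_le (by positivity) hB)))
    _ ≤ (Real.exp (t * m + t ^ 2 * Real.exp (t * T) * B) : ℝ) :=
        EReal.coe_le_coe_iff.2 ((add_comm _ _).trans_le (Real.add_one_le_exp _))

/- Chernoff's bound at `t = s / T` has exponent `s ^ 2 * q * exp s - 2 * s`, so choosing
`exp (-2 * s) = q` gives a bound linear in `q`, as in Chebyshev's inequality. -/
lemma UEND.V_le_sum_le_mul (hX : UEND SL K X) (hdom : StochDom SL X Z) {T m B q : ℝ}
    (hT0 : 0 < T) (hT : ∀ k ω, X k ω ≤ T) (hm : SL.E Z ≤ m)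
    (hB : SL.E (fun ω => Z ω ^ 2) ≤ B) (hq : 0 < q) {n : ℕ} (hn : n * B ≤ T ^ 2 * q) :
    SL.V {ω | n * m + 2 * T ≤ ∑ k ∈ Finset.range n, X k ω} ≤ K * (Real.exp 2 * q) := by
  have hK := hX.one_le
  rcases lt_or_ge 1 q with hq1 | hq1
  · exact (SL.V_le_one _).trans (one_le_mul_of_one_le_of_one_le hK
      (one_le_mul_of_one_le_of_one_le (Real.one_le_exp zero_le_two) hq1.le))
  obtain ⟨s, hs0, hs⟩ := exists_nonneg_exp_sub_le hq hq1
  refine (hX.V_le_sum_le_exp_sq hdom hT0.le hT hm hB (div_nonneg hs0 hT0.le) n _).trans ?_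
  refine mul_le_mul_of_nonneg_left (le_trans (Real.exp_le_exp.2 ?_) hs) (zero_le_one.trans hK)
  rw [div_mul_cancel₀ s hT0.ne']
  calc n * (s / T * m + (s / T) ^ 2 * Real.exp s * B) - s / T * (n * m + 2 * T)
      = (s / T) ^ 2 * Real.exp s * (n * B) - 2 * s := by field_simp; ring
    _ ≤ (s / T) ^ 2 * Real.exp s * (T ^ 2 * q) - 2 * s := by gcongr
    _ = s ^ 2 * q * Real.exp s - 2 * s := by field_simp

/-! ### Laws of large numbers -/

lemma UEND.outerV_frequently_le_sum_of_le (hX : UEND SL K X) (hdom : StochDom SL X Z)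
    {T m B δ : ℝ} (hT0 : 0 ≤ T) (hT : ∀ k ω, X k ω ≤ T) (hm : SL.E Z ≤ m)
    (hB : SL.E (fun ω => Z ω ^ 2) ≤ B) (hδ : 0 < δ) :
    SL.outerV {ω | ∃ᶠ n : ℕ in atTop, n * (m + δ) ≤ ∑ k ∈ Finset.range n, X k ω} = 0 := by
  obtain ⟨t, h_rate, ht⟩ : ∃ t : ℝ, t * Real.exp (t * T) * B < δ ∧ 0 < t := by
    have h_cont : ContinuousAt (fun t => t * Real.exp (t * T) * B) 0 := by fun_prop
    have h_lim : ∀ᶠ t in nhdsWithin 0 (Set.Ioi 0), t * Real.exp (t * T) * B < δ :=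
      nhdsWithin_le_nhds (h_cont.eventually_lt_const (by simpa using hδ))
    exact (h_lim.and self_mem_nhdsWithin).exists
  have h_summable :
      Summable fun n : ℕ => K * Real.exp (n * (t * (t * Real.exp (t * T) * B - δ))) :=
    (Real.summable_exp_nat_mul_iff.2 (mul_neg_of_pos_of_neg ht (sub_neg.2 h_rate))).mul_left K
  refine SL.outerV_frequently_eq_zero h_summable fun n => ?_
  refine (hX.V_le_sum_le_exp_sq hdom hT0 hT hm hB ht.le n _).trans_eq ?_
  ring_nf

lemma UEND.outerV_frequently_le_dyadic_sum (hX : UEND SL K X) (hdom : StochDom SL X Z)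
    (hZ : ∀ ω, 0 ≤ Z ω) (hCh : SL.Choquet Z ≠ ⊤) {m δ : ℝ} (hm : SL.E Z ≤ m) {M : ℕ}
    (hM0 : 0 < M) (hM : 4 ≤ M * δ) :
    SL.outerV {ω | ∃ᶠ j : ℕ in atTop,
      ((M * 2 ^ j : ℕ) : ℝ) * (m + δ) ≤ ∑ k ∈ Finset.range (M * 2 ^ j), X k ω} = 0 := by
  have h_trunc (j : ℕ) : SL.V {ω | ((M * 2 ^ j : ℕ) : ℝ) * m + 2 * 2 ^ (j + 1) ≤
      ∑ k ∈ Finset.range (M * 2 ^ j), min (X k ω) (2 ^ (j + 1))} ≤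
      K * (Real.exp 2 * (M * SL.dyadicSecondMoment Z j)) := by
    have h_lip : LipschitzWith 1 fun x : ℝ => min x (2 ^ (j + 1)) := LipschitzWith.id.min_const _
    have h_mono : Monotone fun x : ℝ => min x (2 ^ (j + 1)) := fun _ _ => min_le_min_right _
    refine (hX.comp h_lip h_mono).V_le_sum_le_mul (hdom.comp h_lip h_mono) (by positivity)
      (fun _ _ => min_le_right _ _) ((SL.mono _ _ fun ω => min_le_left _ _).trans hm)
      (SL.E_sq_min_two_pow_le hZ j)
      (mul_pos (Nat.cast_pos.2 hM0) (SL.dyadicSecondMoment_pos Z j)) (le_of_eq ?_)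
    push_cast
    ring
  have h_small := SL.outerV_frequently_eq_zero
    ((((SL.summable_dyadicSecondMoment hCh).mul_left (M : ℝ)).mul_left _).mul_left K) h_trunc
  have h_exceed := SL.outerV_frequently_eq_zero
    ((SL.summable_two_pow_mul_V hCh).mul_left (M : ℝ)) fun j =>
      (hdom.V_exists_le (pow_lt_pow_right₀ one_lt_two j.lt_succ_self) (M * 2 ^ j)).trans_eq
        (by push_cast; ring)
  refine measure_mono_null (fun ω hω => ?_) (measure_union_null h_small h_exceed)
  by_contra h_not
  simp only [Set.mem_union, Set.mem_ofPred_eq, not_or, not_frequently] at h_not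
  obtain ⟨j, h_le, h_lt, h_bdd⟩ := (hω.and_eventually (h_not.1.and h_not.2)).exists
  push Not at h_bdd
  have h_threshold : 2 * 2 ^ (j + 1) ≤ ((M * 2 ^ j : ℕ) : ℝ) * δ := by
    have h_pow := mul_le_mul_of_nonneg_right hM (show (0 : ℝ) ≤ 2 ^ j by positivity)
    push_cast
    linarith [pow_succ (2 : ℝ) j]
  rw [Finset.sum_congr rfl fun k hk => min_eq_left (h_bdd k (Finset.mem_range.1 hk)).le] at h_lt
  exact h_lt (by linarith)

lemma UEND.outerV_frequently_lt_sum_of_nonneg (hX : UEND SL K X) (hdom : StochDom SL X Z)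
    (hX0 : ∀ k ω, 0 ≤ X k ω) (hZ : ∀ ω, 0 ≤ Z ω) (hCh : SL.Choquet Z ≠ ⊤) {m : ℝ}
    (hm : SL.E Z ≤ m) {δ : ℝ} (hδ : 0 < δ) :
    SL.outerV {ω | ∃ᶠ n : ℕ in atTop, 2 * n * (m + δ) < ∑ k ∈ Finset.range n, X k ω} = 0 := by
  obtain ⟨M, hM⟩ := exists_nat_gt (4 / δ)
  have hM0 : 0 < M := Nat.cast_pos.1 (lt_trans (by positivity) hM)
  have hm0 : 0 ≤ m := EReal.coe_nonneg.1 ((SL.E_nonneg hZ).trans hm)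
  refine measure_mono_null (fun ω hω => ?_) (hX.outerV_frequently_le_dyadic_sum hdom hZ hCh hm hM0
    ((div_lt_iff₀ hδ).1 hM).le)
  refine frequently_atTop.2 fun J => ?_
  obtain ⟨n, hn, h_lt⟩ := frequently_atTop.1 hω (M * 2 ^ J)
  obtain ⟨j, hJj, hnj, hjn⟩ := exists_dyadic_between hM0 hn
  refine ⟨j, hJj, ?_⟩
  calc ((M * 2 ^ j : ℕ) : ℝ) * (m + δ) ≤ 2 * n * (m + δ) := by
        gcongr
        exact_mod_cast hjn
    _ ≤ ∑ k ∈ Finset.range n, X k ω := h_lt.le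
    _ ≤ ∑ k ∈ Finset.range (M * 2 ^ j), X k ω :=
        Finset.sum_le_sum_of_subset_of_nonneg (Finset.range_mono hnj) fun k _ _ => hX0 k ω

lemma max_min_neg_le_add (x c : ℝ) : max (min x c) (-c) ≤ x + max (|x| - c) 0 := by
  have h_abs := neg_abs_le x
  have h_max := le_max_left (|x| - c) 0
  exact max_le ((min_le_left x c).trans (le_add_of_nonneg_right (le_max_right _ _))) (by linarith)

lemma le_max_min_neg_add (x c : ℝ) : x ≤ max (min x c) (-c) + max (x - c) 0 := by
  have h_clamp := le_max_left (min x c) (-c)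
  rcases min_cases x c with ⟨h, -⟩ | ⟨h, -⟩
  · linarith [le_max_right (x - c) 0]
  · linarith [le_max_left (x - c) 0]

lemma UEND.outerV_frequently_lt_sum (hX : UEND SL K X) (hdom : StochDom SL X Z)
    (hunif : Tendsto (fun c : ℝ => SL.E fun ω => max (|Z ω| - c) 0) atTop (nhds 0))
    (hCh : SL.Choquet (fun ω => max (Z ω) 0) ≠ ⊤) {m ε : ℝ} (hm : SL.E Z ≤ m) (hε : 0 < ε) :
    SL.outerV {ω | ∃ᶠ n : ℕ in atTop, n * (m + ε) < ∑ k ∈ Finset.range n, X k ω} = 0 := by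
  obtain ⟨δ, hδ, rfl⟩ : ∃ δ, 0 < δ ∧ ε = 6 * δ := ⟨ε / 6, by positivity, by ring⟩
  obtain ⟨c, hc, hcδ⟩ := SL.exists_E_max_sub_le hunif hδ
  have h_clamp_lip : LipschitzWith 1 fun x : ℝ => max (min x c) (-c) :=
    (LipschitzWith.id.min_const c).max_const (-c)
  have h_clamp_mono : Monotone fun x : ℝ => max (min x c) (-c) := fun x y hxy =>
    max_le_max_right _ (min_le_min_right _ hxy)
  have h_clamp_le (x : ℝ) : max (min x c) (-c) ≤ c := max_le (min_le_right _ _) (by linarith)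
  have h_clamp := (hX.comp h_clamp_lip h_clamp_mono).outerV_frequently_le_sum_of_le
    (hdom.comp h_clamp_lip h_clamp_mono) hc (fun _ _ => h_clamp_le _)
    ((SL.mono _ _ fun ω => max_min_neg_le_add (Z ω) c).trans (SL.E_add_le hm hcδ))
    ((SL.mono _ _ fun ω => sq_le_sq' (le_max_right _ _) (h_clamp_le _)).trans
      (SL.const_eq (c ^ 2)).le) hδ
  have h_tail_lip : LipschitzWith (1 + 0) fun x : ℝ => max (x - c) 0 :=
    (LipschitzWith.id.sub (LipschitzWith.const c)).max_const 0
  have h_tail_mono : Monotone fun x : ℝ => max (x - c) 0 := fun x y hxy =>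
    max_le_max_right _ (sub_le_sub_right hxy c)
  have h_tail := (hX.comp h_tail_lip h_tail_mono).outerV_frequently_lt_sum_of_nonneg
    (hdom.comp h_tail_lip h_tail_mono) (fun _ _ => le_max_right _ _) (fun _ => le_max_right _ _)
    (ne_top_of_le_ne_top hCh
      (SL.Choquet_mono fun ω => max_le_max_right 0 (sub_le_self (Z ω) hc)))
    ((SL.mono _ _ fun ω => max_le_max_right _ (sub_le_sub_right (le_abs_self _) c)).trans hcδ) hδ
  refine measure_mono_null (fun ω hω => ?_) (measure_union_null h_clamp h_tail)
  by_contra h_not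
  simp only [Set.mem_union, Set.mem_ofPred_eq, not_or, not_frequently, not_le, not_lt] at h_not
  obtain ⟨n, h_lt, h_clamp_n, h_tail_n⟩ := (hω.and_eventually (h_not.1.and h_not.2)).exists
  have h_split : ∑ k ∈ Finset.range n, X k ω ≤ ∑ k ∈ Finset.range n, max (min (X k ω) c) (-c) +
      ∑ k ∈ Finset.range n, max (X k ω - c) 0 := by
    rw [← Finset.sum_add_distrib]
    exact Finset.sum_le_sum fun k _ => le_max_min_neg_add (X k ω) c
  linarith

theorem UEND.outerV_lt_limsup_average (hX : UEND SL K X) (hdom : StochDom SL X Z)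
    (hunif : Tendsto (fun c : ℝ => SL.E fun ω => max (|Z ω| - c) 0) atTop (nhds 0))
    (hCh : SL.Choquet (fun ω => max (Z ω) 0) ≠ ⊤) :
    SL.outerV {ω | SL.E Z < limsup (fun n : ℕ =>
      (((∑ k ∈ Finset.range n, X k ω) / n : ℝ) : EReal)) atTop} = 0 := by
  obtain ⟨μ, hμ⟩ := SL.exists_E_eq_coe hunif
  have h_null := measure_iUnion_null fun p : ℕ =>
    hX.outerV_frequently_lt_sum hdom hunif hCh hμ.le (Nat.one_div_pos_of_nat (α := ℝ) (n := p))
  refine measure_mono_null (fun ω hω => ?_) h_null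
  rw [Set.mem_ofPred_eq, hμ] at hω
  obtain ⟨r, hμr, hr⟩ := EReal.lt_iff_exists_real_btwn.1 hω
  obtain ⟨p, hp⟩ := exists_nat_one_div_lt (sub_pos.2 (EReal.coe_lt_coe_iff.1 hμr))
  refine Set.mem_iUnion.2 ⟨p, ((frequently_lt_of_lt_limsup (by isBoundedDefault) hr).and_eventually
    (eventually_gt_atTop 0)).mono fun n ⟨hn, hn0⟩ => ?_⟩
  rw [EReal.coe_lt_coe_iff, lt_div_iff₀' (Nat.cast_pos.2 hn0)] at hn
  exact (mul_le_mul_of_nonneg_left (by linarith) n.cast_nonneg).trans_lt hn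

lemma liminf_average_lt_cE_iff (ω : Ω) :
    liminf (fun n : ℕ => (((∑ k ∈ Finset.range n, X k ω) / n : ℝ) : EReal)) atTop < SL.cE Z ↔
      SL.E (fun ω => -Z ω) <
        limsup (fun n : ℕ => (((∑ k ∈ Finset.range n, -X k ω) / n : ℝ) : EReal)) atTop := by
  rw [cE, EReal.lt_neg_comm, ← EReal.limsup_neg]
  simp only [Pi.neg_def, ← EReal.coe_neg, ← neg_div, Finset.sum_neg_distrib]

end SublinearExp

theorem stmt8_general {Ω : Type} (SL : SublinearExp Ω) (X : ℕ → Ω → ℝ) (Z : Ω → ℝ) (K : ℝ)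
    (hup : SublinearExp.StochDom SL X Z)
    (hlow : SublinearExp.StochDom SL (fun k ω => -X k ω) fun ω => -Z ω)
    (hEND : SublinearExp.END SL K X)
    (hunif : Tendsto (fun c : ℝ => SL.E fun ω => max (|Z ω| - c) 0) atTop (nhds (0 : EReal)))
    (hCh : SL.Choquet (fun ω => |Z ω|) ≠ ⊤) :
    SL.Vout
      ({ω | liminf (fun n : ℕ =>
          (((∑ k ∈ Finset.range n, X k ω) / n : ℝ) : EReal)) atTop < SL.cE Z} ∪
       {ω | SL.E Z < limsup (fun n : ℕ =>
          (((∑ k ∈ Finset.range n, X k ω) / n : ℝ) : EReal)) atTop}) = 0 := by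
  have hCh_pos : SL.Choquet (fun ω => max (Z ω) 0) ≠ ⊤ :=
    ne_top_of_le_ne_top hCh (SL.Choquet_mono fun ω => max_le (le_abs_self _) (abs_nonneg _))
  have hCh_neg : SL.Choquet (fun ω => max (-Z ω) 0) ≠ ⊤ :=
    ne_top_of_le_ne_top hCh (SL.Choquet_mono fun ω => max_le (neg_le_abs _) (abs_nonneg _))
  simp only [SL.Vout_eq_outerV, SublinearExp.liminf_average_lt_cE_iff]
  exact measure_union_null
    (hEND.2.neg.outerV_lt_limsup_average hlow (by simpa only [abs_neg] using hunif) hCh_neg)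
    (hEND.1.outerV_lt_limsup_average hup hunif hCh_pos)

/-- Theorem 4.3(a), second part: strong law of large numbers for extended
negatively dependent, identically distributed random variables. -/
theorem stmt8 {Ω : Type} (SL : SublinearExp Ω) (X : ℕ → Ω → ℝ)
    (K : ℝ) (hK : 1 ≤ K)
    (hid : SublinearExp.IdentDist SL X)
    (hEND : SublinearExp.END SL K X)
    (hunif : Tendsto (fun c : ℝ => SL.E fun ω => max (|X 0 ω| - c) 0)
      atTop (nhds (0 : EReal)))
    (hCh : SL.Choquet (fun ω => |X 0 ω|) ≠ ⊤) :
    SL.Vout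
      ({ω | liminf (fun n : ℕ =>
          (((∑ k ∈ Finset.range n, X k ω) / n : ℝ) : EReal)) atTop < SL.cE (X 0)} ∪
       {ω | SL.E (X 0) < limsup (fun n : ℕ =>
          (((∑ k ∈ Finset.range n, X k ω) / n : ℝ) : EReal)) atTop}) = 0 :=
  stmt8_general SL X (X 0) K (hid.stochDom_comp LipschitzWith.id)
    (hid.stochDom_comp LipschitzWith.id.neg) hEND hunif hCh
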